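/- arXiv:2106.10913 — 9 statements merged into one kernel-verified Lean document; each statement's English description precedes it below -/
import Mathlib

section
/- Let A ∈ ℝ^{n×n} be symmetric positive definite and suppose the subdomains have the minimal overlap property with respect to A. Define the boolean sparsity matrix S(A) ∈ ℝ^{n×n} by S(A)_{ij} = 1 if A_{ij} ≠ 0 and S(A)_{ij} = 0 otherwise; define M_μ := Σ_{s=1}^N (R^s)^T R^s S(A) (R^s)^T R^s; define B ∈ ℝ^{n×n} by B_{ij} = A_{ij}/(M_μ)_{ij} if A_{ij} ≠ 0 and B_{ij} = 0 otherwise; and define B^s := R^s B (R^s)^T for each s. Then each B^s is symmetric and A = Σ_{s=1}^N (R^s)^T B^s R^s. -/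
open Matrix

/-- The boolean restriction matrix `R^s` whose rows are the canonical basis
vectors `e_i^T` for `i ∈ Ω`. -/
noncomputable def restrict {n : ℕ} (Ω : Finset (Fin n)) :
    Matrix {i : Fin n // i ∈ Ω} (Fin n) ℝ :=
  Matrix.of fun i j => if (i : Fin n) = j then 1 else 0

theorem restrict_gram {n : ℕ} (Ω : Finset (Fin n)) :
    (restrict Ω)ᵀ * restrict Ω = Matrix.diagonal (fun i => if i ∈ Ω then (1 : ℝ) else 0) := by
  ext i j
  simp only [Matrix.mul_apply, Matrix.transpose_apply, restrict, Matrix.of_apply,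
    Matrix.diagonal_apply]
  rw [Finset.sum_coe_sort Ω (fun x => (if x = i then (1 : ℝ) else 0) * (if x = j then 1 else 0))]
  simp only [ite_mul, one_mul, zero_mul, Finset.sum_ite_eq']
  by_cases h : i = j <;> by_cases h' : i ∈ Ω <;> simp [h, h']

theorem gram_sandwich {n N : ℕ} (Ω : Fin N → Finset (Fin n)) (X : Matrix (Fin n) (Fin n) ℝ)
    (i j : Fin n) :
    (∑ s, (restrict (Ω s))ᵀ * restrict (Ω s) * X * ((restrict (Ω s))ᵀ * restrict (Ω s))) i j
      = X i j * ∑ s, (if i ∈ Ω s ∧ j ∈ Ω s then (1 : ℝ) else 0) := by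
  rw [Matrix.sum_apply, Finset.mul_sum]
  refine Finset.sum_congr rfl fun s _ => ?_
  rw [restrict_gram, Matrix.mul_diagonal, Matrix.diagonal_mul]
  by_cases h : i ∈ Ω s <;> by_cases h' : j ∈ Ω s <;> simp [h, h']

theorem stmt0 {n N : ℕ} (hn : 0 < n) (hN : 0 < N)
    (Ω : Fin N → Finset (Fin n))
    (hcover : ∀ i : Fin n, ∃ s, i ∈ Ω s)
    (A : Matrix (Fin n) (Fin n) ℝ) (hA : A.PosDef)
    (hminov : ∀ i j, A i j ≠ 0 → ∃ s, i ∈ Ω s ∧ j ∈ Ω s)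
    (S : Matrix (Fin n) (Fin n) ℝ)
    (hS : ∀ i j, S i j = if A i j ≠ 0 then 1 else 0)
    (Mμ : Matrix (Fin n) (Fin n) ℝ)
    (hM : Mμ = ∑ s, (restrict (Ω s))ᵀ * restrict (Ω s) * S *
      ((restrict (Ω s))ᵀ * restrict (Ω s)))
    (B : Matrix (Fin n) (Fin n) ℝ)
    (hB : ∀ i j, B i j = if A i j ≠ 0 then A i j / Mμ i j else 0)
    (Bs : (s : Fin N) → Matrix {i : Fin n // i ∈ Ω s} {i : Fin n // i ∈ Ω s} ℝ)
    (hBs : ∀ s, Bs s = restrict (Ω s) * B * (restrict (Ω s))ᵀ) :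
    (∀ s, (Bs s).IsSymm) ∧
      A = ∑ s, (restrict (Ω s))ᵀ * Bs s * restrict (Ω s) := by
  have hMe : ∀ i j, Mμ i j = S i j * ∑ s, (if i ∈ Ω s ∧ j ∈ Ω s then (1 : ℝ) else 0) := by
    intro i j
    rw [hM, gram_sandwich]
  have hAs : ∀ i j, A j i = A i j := fun i j => by
    simpa using hA.isHermitian.apply i j
  have hMs : ∀ i j, Mμ j i = Mμ i j := by
    intro i j
    rw [hMe, hMe, hS, hS, hAs i j]
    simp only [and_comm]
  have hBsym : Bᵀ = B := by
    ext i j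
    rw [Matrix.transpose_apply, hB, hB, hAs i j, hMs i j]
  refine ⟨fun s => ?_, ?_⟩
  · rw [hBs, Matrix.IsSymm, Matrix.transpose_mul, Matrix.transpose_mul,
      Matrix.transpose_transpose, hBsym, Matrix.mul_assoc]
  · have e : ∑ s, (restrict (Ω s))ᵀ * Bs s * restrict (Ω s)
        = ∑ s, (restrict (Ω s))ᵀ * restrict (Ω s) * B * ((restrict (Ω s))ᵀ * restrict (Ω s)) :=
      Finset.sum_congr rfl fun s _ => by rw [hBs]; simp only [Matrix.mul_assoc]
    rw [e]
    ext i j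
    rw [gram_sandwich, hB]
    by_cases h : A i j = 0
    · simp [h]
    · obtain ⟨s, hs⟩ := hminov i j h
      have hpos : 0 < ∑ s, (if i ∈ Ω s ∧ j ∈ Ω s then (1 : ℝ) else 0) :=
        Finset.sum_pos' (fun t _ => by split_ifs <;> norm_num)
          ⟨s, Finset.mem_univ s, by rw [if_pos hs]; norm_num⟩
      rw [if_pos h, hMe, hS, if_pos h, one_mul, div_mul_cancel₀ _ hpos.ne']
end

section
/- Let A ∈ ℝ^{n×n} be symmetric positive definite and let B^s ∈ ℝ^{n^s×n^s}, s = 1,…,N, be symmetric matrices with A = Σ_{s=1}^N (R^s)^T B^s R^s. For each s suppose B^s = A_+^s − A_-^s where A_+^s and A_-^s are symmetric positive semi-definite with A_+^s A_-^s = 0. Define A_+ := Σ_{s=1}^N (R^s)^T A_+^s R^s and A_- := Σ_{s=1}^N (R^s)^T A_-^s R^s. Then the rank of A_- satisfies rank(A_-) ≤ (Σ_{s=1}^N n^s) − n. -/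
open Matrix

lemma rank_add_le_aux {n : ℕ} (A B : Matrix (Fin n) (Fin n) ℝ) :
    (A + B).rank ≤ A.rank + B.rank := by
  unfold Matrix.rank
  rw [Matrix.mulVecLin_add]
  refine (Submodule.finrank_mono ?_).trans
    (Submodule.finrank_add_le_finrank_add_finrank
      (LinearMap.range A.mulVecLin) (LinearMap.range B.mulVecLin))
  rintro _ ⟨x, rfl⟩
  exact Submodule.mem_sup.2 ⟨_, ⟨x, rfl⟩, _, ⟨x, rfl⟩, rfl⟩

lemma rank_sum_le_aux {n : ℕ} {ι : Type*} (t : Finset ι) (M : ι → Matrix (Fin n) (Fin n) ℝ) :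
    (∑ s ∈ t, M s).rank ≤ ∑ s ∈ t, (M s).rank := by
  classical
  induction t using Finset.induction_on with
  | empty => simp
  | insert a t ha ih =>
    rw [Finset.sum_insert ha, Finset.sum_insert ha]
    exact (rank_add_le_aux _ _).trans (by omega)

lemma rank_conj_le_aux {n : ℕ} (Ω : Finset (Fin n))
    (M : Matrix {i : Fin n // i ∈ Ω} {i : Fin n // i ∈ Ω} ℝ) :
    ((restrict Ω)ᵀ * M * restrict Ω).rank ≤ M.rank :=
  (Matrix.rank_mul_le_left _ _).trans (Matrix.rank_mul_le_right _ _)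

theorem stmt5 {n N : ℕ} (hn : 0 < n) (hN : 0 < N)
    (Ω : Fin N → Finset (Fin n))
    (hcover : ∀ i : Fin n, ∃ s, i ∈ Ω s)
    (A : Matrix (Fin n) (Fin n) ℝ) (hA : A.PosDef)
    (Bs Ap Am : (s : Fin N) → Matrix {i : Fin n // i ∈ Ω s} {i : Fin n // i ∈ Ω s} ℝ)
    (hBsym : ∀ s, (Bs s).IsSymm)
    (hsplit : A = ∑ s, (restrict (Ω s))ᵀ * Bs s * restrict (Ω s))
    (hdiff : ∀ s, Bs s = Ap s - Am s)
    (hAp : ∀ s, (Ap s).PosSemidef)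
    (hAm : ∀ s, (Am s).PosSemidef)
    (hApAm : ∀ s, Ap s * Am s = 0)
    (Aplus Aminus : Matrix (Fin n) (Fin n) ℝ)
    (hAplus : Aplus = ∑ s, (restrict (Ω s))ᵀ * Ap s * restrict (Ω s))
    (hAminus : Aminus = ∑ s, (restrict (Ω s))ᵀ * Am s * restrict (Ω s)) :
    Aminus.rank ≤ (∑ s, (Ω s).card) - n := by
  have hrel : Aplus = A + Aminus := by
    rw [hAplus, hsplit, hAminus, ← Finset.sum_add_distrib]
    refine Finset.sum_congr rfl fun s _ => ?_
    rw [hdiff s, Matrix.mul_sub, Matrix.sub_mul]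
    abel
  have hmpsd : Aminus.PosSemidef := by
    rw [hAminus]
    refine Matrix.posSemidef_sum _ fun s _ => ?_
    have h := (hAm s).conjTranspose_mul_mul_same (restrict (Ω s))
    rwa [Matrix.conjTranspose_eq_transpose_of_trivial] at h
  have hpd : Aplus.PosDef := by
    rw [hrel]
    exact hA.add_posSemidef hmpsd
  have hn' : Aplus.rank = n := by
    rw [Matrix.rank_of_isUnit _ hpd.isUnit, Fintype.card_fin]
  have h1 : Aplus.rank ≤ ∑ s, (Ap s).rank := by
    rw [hAplus]
    exact (rank_sum_le_aux _ _).trans (Finset.sum_le_sum fun s _ => rank_conj_le_aux _ _)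
  have h2 : Aminus.rank ≤ ∑ s, (Am s).rank := by
    rw [hAminus]
    exact (rank_sum_le_aux _ _).trans (Finset.sum_le_sum fun s _ => rank_conj_le_aux _ _)
  have h3 : ∑ s, (Ap s).rank + ∑ s, (Am s).rank ≤ ∑ s, (Ω s).card := by
    rw [← Finset.sum_add_distrib]
    refine Finset.sum_le_sum fun s _ => ?_
    have h := Matrix.rank_add_rank_le_card_of_mul_eq_zero (hApAm s)
    simpa using h
  omega
end

section
/- Let A_+ ∈ ℝ^{n×n} be symmetric positive definite, let Λ_- ∈ ℝ^{n_-×n_-} be diagonal positive definite, let V_- ∈ ℝ^{n×n_-}, and suppose A := A_+ − V_- Λ_- (V_-)^T is symmetric positive definite. Then the matrix Λ_-^{-1} − (V_-)^T A_+^{-1} V_- ∈ ℝ^{n_-×n_-} is invertible. -/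
open Matrix

theorem stmt6 {n nm : ℕ} (hn : 0 < n) (hnm : 0 < nm) (hle : nm ≤ n)
    (Aplus : Matrix (Fin n) (Fin n) ℝ) (hAplus : Aplus.PosDef)
    (d : Fin nm → ℝ) (hd : ∀ k, 0 < d k)
    (V : Matrix (Fin n) (Fin nm) ℝ)
    (A : Matrix (Fin n) (Fin n) ℝ)
    (hA : A = Aplus - V * Matrix.diagonal d * Vᵀ)
    (hApos : A.PosDef) :
    IsUnit ((Matrix.diagonal d)⁻¹ - Vᵀ * Aplus⁻¹ * V) := by
  have hP : IsUnit Aplus := hAplus.isUnit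
  have hD : IsUnit (Matrix.diagonal d) := by
    rw [Matrix.isUnit_diagonal, Pi.isUnit_iff]
    exact fun k => (hd k).ne'.isUnit
  have hDi : IsUnit (Matrix.diagonal d)⁻¹ := (Matrix.isUnit_nonsing_inv_iff).2 hD
  have hDD : (Matrix.diagonal d)⁻¹⁻¹ = Matrix.diagonal d :=
    Matrix.nonsing_inv_nonsing_inv _ ((Matrix.isUnit_iff_isUnit_det _).1 hD)
  have hAu : IsUnit A := hApos.isUnit
  generalize (Matrix.diagonal d)⁻¹ = E at *
  letI := hP.invertible
  letI := hDi.invertible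
  have h1 := Matrix.det_fromBlocks₁₁ Aplus V Vᵀ E
  have h2 := Matrix.det_fromBlocks₂₂ Aplus V Vᵀ E
  rw [h1, Matrix.invOf_eq_nonsing_inv, Matrix.invOf_eq_nonsing_inv, hDD, ← hA] at h2
  rw [Matrix.isUnit_iff_isUnit_det] at *
  have h3 := hDi.mul hAu
  rw [← h2] at h3
  exact isUnit_of_mul_isUnit_right h3
end

section
/- Let A_+ ∈ ℝ^{n×n} be symmetric positive definite, let Λ_- ∈ ℝ^{n_-×n_-} be diagonal positive definite, let V_- ∈ ℝ^{n×n_-}, and suppose A := A_+ − V_- Λ_- (V_-)^T is symmetric positive definite. Let H_2 ∈ ℝ^{n×n} be symmetric positive definite and let 0 < λ_min ≤ λ_max be such that every eigenvalue λ of H_2 A_+ (i.e., every λ ∈ ℝ for which there is x ≠ 0 with H_2 A_+ x = λ x) satisfies λ_min ≤ λ ≤ λ_max. Define the inexact AWG preconditioner H_{3,inex} := H_2 + A_+^{-1} V_- (Λ_-^{-1} − (V_-)^T A_+^{-1} V_-)^{-1} (V_-)^T A_+^{-1}. Then every eigenvalue λ of H_{3,inex} A satisfies min(1, λ_min) ≤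 λ ≤ max(1, λ_max). -/
open Matrix

lemma aux_psd {n : ℕ} (C : Matrix (Fin n) (Fin n) ℝ) (hC : C.IsHermitian)
    (h : ∀ (mu : ℝ) (u : Fin n → ℝ), u ≠ 0 → C *ᵥ u = mu • u → 0 ≤ mu) (w : Fin n → ℝ) :
    0 ≤ w ⬝ᵥ (C *ᵥ w) := by
  have hp : C.PosSemidef := by
    rw [hC.posSemidef_iff_eigenvalues_nonneg]
    intro j
    refine h _ _ ?_ (hC.mulVec_eigenvectorBasis j)
    intro h0
    apply hC.eigenvectorBasis.orthonormal.ne_zero j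
    ext i
    exact congrFun h0 i
  simpa using hp.dotProduct_mulVec_nonneg w

open scoped MatrixOrder in
lemma aux_factor {n : ℕ} (P : Matrix (Fin n) (Fin n) ℝ) (hP : P.PosDef) :
    ∃ B : Matrix (Fin n) (Fin n) ℝ, P = Bᵀ * B := by
  obtain ⟨B, hB⟩ := CStarAlgebra.nonneg_iff_eq_star_mul_self.mp hP.posSemidef.nonneg
  exact ⟨B, by simpa [Matrix.star_eq_conjTranspose] using hB⟩

lemma aux_rayleigh {n : ℕ} (P H : Matrix (Fin n) (Fin n) ℝ) (hP : P.PosDef) (hH : H.PosDef)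
    (l m : ℝ) (hspec : ∀ (lam : ℝ) (x : Fin n → ℝ), x ≠ 0 →
      (H * P) *ᵥ x = lam • x → l ≤ lam ∧ lam ≤ m) (z : Fin n → ℝ) :
    l * (z ⬝ᵥ (P *ᵥ z)) ≤ (P *ᵥ z) ⬝ᵥ (H *ᵥ (P *ᵥ z)) ∧
    (P *ᵥ z) ⬝ᵥ (H *ᵥ (P *ᵥ z)) ≤ m * (z ⬝ᵥ (P *ᵥ z)) := by
  have hPu : IsUnit P := hP.isUnit
  obtain ⟨B, hB⟩ := aux_factor P hP
  have hHt : Hᵀ = H := by simpa using hH.isHermitian.eq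
  have hBt : IsUnit Bᵀ := by
    rw [Matrix.isUnit_iff_isUnit_det] at hPu ⊢
    rw [hB, Matrix.det_mul] at hPu
    exact isUnit_of_mul_isUnit_left hPu
  have hCt : (B * H * Bᵀ)ᵀ = B * H * Bᵀ := by
    simp [Matrix.transpose_mul, hHt, Matrix.mul_assoc]
  have hev : ∀ (mu : ℝ) (u : Fin n → ℝ), u ≠ 0 → (B * H * Bᵀ) *ᵥ u = mu • u →
      l ≤ mu ∧ mu ≤ m := by
    intro mu u hu he
    apply hspec mu ((H * Bᵀ) *ᵥ u)
    · intro h0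
      apply hu
      have := Matrix.mulVec_injective_of_isUnit (hH.isUnit.mul hBt)
      apply this
      simpa using h0
    · rw [Matrix.mulVec_mulVec, hB]
      have : H * (Bᵀ * B) * (H * Bᵀ) = (H * Bᵀ) * (B * H * Bᵀ) := by
        simp only [Matrix.mul_assoc]
      rw [this, ← Matrix.mulVec_mulVec, he, Matrix.mulVec_smul]
  have e1 : (P *ᵥ z) ⬝ᵥ (H *ᵥ (P *ᵥ z)) = (B *ᵥ z) ⬝ᵥ ((B * H * Bᵀ) *ᵥ (B *ᵥ z)) := by
    rw [hB]
    simp only [← Matrix.mulVec_mulVec]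
    rw [Matrix.dotProduct_mulVec (B *ᵥ z) B, ← Matrix.mulVec_transpose]
  have e2 : z ⬝ᵥ (P *ᵥ z) = (B *ᵥ z) ⬝ᵥ (B *ᵥ z) := by
    rw [hB, ← Matrix.mulVec_mulVec, Matrix.dotProduct_mulVec z, Matrix.vecMul_transpose]
  rw [e1, e2]
  generalize B *ᵥ z = w
  generalize B * H * Bᵀ = C at *
  constructor
  · have := aux_psd (C - l • 1) (by
      rw [Matrix.IsHermitian]; simp [hCt]) (by
      intro mu u hu he
      have := hev (mu + l) u hu (by
        rw [Matrix.sub_mulVec, Matrix.smul_mulVec, Matrix.one_mulVec] at he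
        rw [add_smul, ← he]; simp)
      linarith [this.1]) w
    rw [Matrix.sub_mulVec, Matrix.smul_mulVec, Matrix.one_mulVec, dotProduct_sub,
      dotProduct_smul, smul_eq_mul] at this
    linarith
  · have := aux_psd (m • 1 - C) (by
      rw [Matrix.IsHermitian]; simp [hCt]) (by
      intro mu u hu he
      have := hev (m - mu) u hu (by
        rw [Matrix.sub_mulVec, Matrix.smul_mulVec, Matrix.one_mulVec] at he
        rw [sub_smul, ← he]; simp)
      linarith [this.2]) w
    rw [Matrix.sub_mulVec, Matrix.smul_mulVec, Matrix.one_mulVec, dotProduct_sub,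
      dotProduct_smul, smul_eq_mul] at this
    linarith

theorem stmt8 {n nm : ℕ} (hn : 0 < n) (hnm : 0 < nm) (hle : nm ≤ n)
    (Aplus : Matrix (Fin n) (Fin n) ℝ) (hAplus : Aplus.PosDef)
    (d : Fin nm → ℝ) (hd : ∀ k, 0 < d k)
    (V : Matrix (Fin n) (Fin nm) ℝ)
    (A : Matrix (Fin n) (Fin n) ℝ)
    (hA : A = Aplus - V * Matrix.diagonal d * Vᵀ)
    (hApos : A.PosDef)
    (H2 : Matrix (Fin n) (Fin n) ℝ) (hH2 : H2.PosDef)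
    (lmin lmax : ℝ) (hlmin : 0 < lmin) (hlml : lmin ≤ lmax)
    (hspec : ∀ (lam : ℝ) (x : Fin n → ℝ), x ≠ 0 →
      (H2 * Aplus) *ᵥ x = lam • x → lmin ≤ lam ∧ lam ≤ lmax)
    (H3 : Matrix (Fin n) (Fin n) ℝ)
    (hH3 : H3 = H2 +
      Aplus⁻¹ * V * ((Matrix.diagonal d)⁻¹ - Vᵀ * Aplus⁻¹ * V)⁻¹ * Vᵀ * Aplus⁻¹) :
    ∀ (lam : ℝ) (x : Fin n → ℝ), x ≠ 0 → (H3 * A) *ᵥ x = lam • x →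
      min 1 lmin ≤ lam ∧ lam ≤ max 1 lmax := by
  intro lam x hx he
  have hPu : IsUnit Aplus.det := (Matrix.isUnit_iff_isUnit_det _).mp hAplus.isUnit
  have hPi : Aplus⁻¹ * Aplus = 1 := Matrix.nonsing_inv_mul _ hPu
  have hPi' : Aplus * Aplus⁻¹ = 1 := Matrix.mul_nonsing_inv _ hPu
  have hDu : IsUnit (Matrix.diagonal d).det := by
    rw [Matrix.det_diagonal]
    exact (Finset.prod_pos fun k _ => hd k).ne'.isUnit
  have hDi : (Matrix.diagonal d)⁻¹ * Matrix.diagonal d = 1 := Matrix.nonsing_inv_mul _ hDu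
  have hDi' : Matrix.diagonal d * (Matrix.diagonal d)⁻¹ = 1 := Matrix.mul_nonsing_inv _ hDu
  have hVDV : V * Matrix.diagonal d * Vᵀ = Aplus - A := by rw [hA]; simp
  have hDnn : ∀ w : Fin nm → ℝ, 0 ≤ w ⬝ᵥ (Matrix.diagonal d *ᵥ w) := by
    intro w
    simp only [dotProduct, Matrix.mulVec_diagonal]
    exact Finset.sum_nonneg fun k _ => by nlinarith [mul_nonneg (hd k).le (mul_self_nonneg (w k))]
  clear hA
  generalize hPdef : Aplus⁻¹ = P at *
  generalize hDdef : Matrix.diagonal d = D at *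
  -- invertibility of the small matrix
  have hM : IsUnit (D⁻¹ - Vᵀ * P * V).det := by
    rw [isUnit_iff_ne_zero]
    intro h0
    obtain ⟨v, hv, hv0⟩ := Matrix.exists_mulVec_eq_zero_iff.mpr h0
    have h1 : D⁻¹ *ᵥ v = (Vᵀ * P * V) *ᵥ v := by
      rw [Matrix.sub_mulVec] at hv0
      exact sub_eq_zero.mp hv0
    have h2 : A *ᵥ ((P * V) *ᵥ v) = 0 := by
      have hAA : A = Aplus - V * D * Vᵀ := by rw [hVDV]; simp
      rw [hAA, Matrix.sub_mulVec, Matrix.mulVec_mulVec, Matrix.mulVec_mulVec, ← Matrix.mul_assoc,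
        hPi', Matrix.one_mul]
      have : V * D * Vᵀ * (P * V) = (V * D) * (Vᵀ * P * V) := by simp only [Matrix.mul_assoc]
      rw [this, ← Matrix.mulVec_mulVec, ← h1, Matrix.mulVec_mulVec, Matrix.mul_assoc, hDi',
        Matrix.mul_one, sub_self]
    have h3 : (P * V) *ᵥ v = 0 := by
      apply Matrix.mulVec_injective_of_isUnit hApos.isUnit
      simpa using h2
    apply hv
    have h4 : D⁻¹ *ᵥ v = 0 := by
      rw [h1, Matrix.mul_assoc, ← Matrix.mulVec_mulVec, h3, Matrix.mulVec_zero]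
    have h5 : D *ᵥ (D⁻¹ *ᵥ v) = v := by
      rw [Matrix.mulVec_mulVec, hDi', Matrix.one_mulVec]
    rw [← h5, h4, Matrix.mulVec_zero]
  have hk1 : (D⁻¹ - Vᵀ * P * V) * (D * Vᵀ) = Vᵀ * P * A := by
    have : Vᵀ * P * V * (D * Vᵀ) = Vᵀ * P * (V * D * Vᵀ) := by simp only [Matrix.mul_assoc]
    rw [Matrix.sub_mul, this, hVDV, ← Matrix.mul_assoc, hDi, Matrix.one_mul, Matrix.mul_sub,
      Matrix.mul_assoc Vᵀ P Aplus, hPi, Matrix.mul_one, sub_sub_cancel]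
  have hk2 : (D⁻¹ - Vᵀ * P * V)⁻¹ * (Vᵀ * P * A) = D * Vᵀ := by
    rw [← hk1, ← Matrix.mul_assoc, Matrix.nonsing_inv_mul _ hM, Matrix.one_mul]
  have hk3 : H3 * A = H2 * A + 1 - P * A := by
    have : P * V * (D⁻¹ - Vᵀ * P * V)⁻¹ * Vᵀ * P * A
        = P * V * ((D⁻¹ - Vᵀ * P * V)⁻¹ * (Vᵀ * P * A)) := by simp only [Matrix.mul_assoc]
    rw [hH3, Matrix.add_mul, this, hk2]
    have : P * V * (D * Vᵀ) = P * (V * D * Vᵀ) := by simp only [Matrix.mul_assoc]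
    rw [this, hVDV, Matrix.mul_sub, hPi, add_sub_assoc]
  have hAx : Aplus *ᵥ (P *ᵥ (A *ᵥ x)) = A *ᵥ x := by
    rw [Matrix.mulVec_mulVec, hPi', Matrix.one_mulVec]
  have hray := aux_rayleigh Aplus H2 hAplus hH2 lmin lmax hspec (P *ᵥ (A *ᵥ x))
  have hzpos := hAplus.posSemidef.dotProduct_mulVec_nonneg (P *ᵥ (A *ᵥ x))
  have hxpos := hApos.dotProduct_mulVec_pos hx
  simp only [star_trivial] at hzpos hxpos
  rw [hAx] at hray hzpos
  have he2 : (A *ᵥ x) ⬝ᵥ (H2 *ᵥ (A *ᵥ x)) + x ⬝ᵥ (A *ᵥ x) - (P *ᵥ (A *ᵥ x)) ⬝ᵥ (A *ᵥ x)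
      = lam * (x ⬝ᵥ (A *ᵥ x)) := by
    have h1 := congrArg (fun w => (A *ᵥ x) ⬝ᵥ w) he
    simp only [hk3, Matrix.sub_mulVec, Matrix.add_mulVec, Matrix.one_mulVec,
      ← Matrix.mulVec_mulVec, dotProduct_sub, dotProduct_add, dotProduct_smul, smul_eq_mul] at h1
    rw [dotProduct_comm x, dotProduct_comm (P *ᵥ _)]
    exact h1
  -- comparison
  have hcmp : (P *ᵥ (A *ᵥ x)) ⬝ᵥ (A *ᵥ x) ≤ x ⬝ᵥ (A *ᵥ x) := by
    generalize P *ᵥ (A *ᵥ x) = z at *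
    have h1 := hApos.posSemidef.dotProduct_mulVec_nonneg (x - z)
    simp only [star_trivial, Matrix.mulVec_sub, dotProduct_sub, sub_dotProduct] at h1
    have h2 : x ⬝ᵥ (A *ᵥ z) = z ⬝ᵥ (A *ᵥ x) := by
      have hAt : Aᵀ = A := by simpa using hApos.isHermitian.eq
      rw [Matrix.dotProduct_mulVec, ← Matrix.mulVec_transpose, hAt, dotProduct_comm]
    have h3 : z ⬝ᵥ (A *ᵥ z) ≤ z ⬝ᵥ (A *ᵥ x) := by
      have h4 := hDnn (Vᵀ *ᵥ z)
      have h5 : z ⬝ᵥ ((V * D * Vᵀ) *ᵥ z) = (Vᵀ *ᵥ z) ⬝ᵥ (D *ᵥ (Vᵀ *ᵥ z)) := by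
        rw [Matrix.mul_assoc, ← Matrix.mulVec_mulVec, Matrix.dotProduct_mulVec,
          ← Matrix.mulVec_transpose, ← Matrix.mulVec_mulVec]
      rw [← h5, hVDV, Matrix.sub_mulVec, dotProduct_sub, hAx] at h4
      linarith
    linarith
  obtain ⟨hr1, hr2⟩ := hray
  generalize (A *ᵥ x) ⬝ᵥ (H2 *ᵥ (A *ᵥ x)) = h at *
  generalize (P *ᵥ (A *ᵥ x)) ⬝ᵥ (A *ᵥ x) = b at *
  generalize x ⬝ᵥ (A *ᵥ x) = a at *
  constructor
  · rcases le_total 1 lmin with h1 | h1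
    · refine (min_le_left _ _).trans ?_
      by_contra! hc
      nlinarith
    · refine (min_le_right _ _).trans ?_
      by_contra! hc
      nlinarith
  · rcases le_total 1 lmax with h1 | h1
    · refine le_trans ?_ (le_max_right _ _)
      by_contra! hc
      nlinarith
    · refine le_trans ?_ (le_max_left _ _)
      by_contra! hc
      nlinarith
end

section
/- Let A_+ ∈ ℝ^{n×n} be symmetric positive definite, let Λ_- ∈ ℝ^{n_-×n_-} be diagonal positive definite, let V_- ∈ ℝ^{n×n_-}, and suppose A := A_+ − V_- Λ_- (V_-)^T is symmetric positive definite. Then range(A_+^{-1} V_-) = range(A^{-1} V_-), where range(M) denotes the column space of a matrix M. -/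
open Matrix

theorem range_aux {n m : ℕ} (B C : Matrix (Fin n) (Fin n) ℝ) (V : Matrix (Fin n) (Fin m) ℝ)
    (W : Matrix (Fin m) (Fin n) ℝ) (hB : IsUnit B.det) (hC : IsUnit C.det)
    (h : B = C + V * W) :
    LinearMap.range (C⁻¹ * V).mulVecLin ≤ LinearMap.range (B⁻¹ * V).mulVecLin := by
  have key : C⁻¹ * V = (B⁻¹ * V) * (1 + W * (C⁻¹ * V)) := by
    have h1 : B * (C⁻¹ * V) = V * (1 + W * (C⁻¹ * V)) := by
      rw [h, Matrix.add_mul, Matrix.mul_nonsing_inv_cancel_left _ _ hC, Matrix.mul_add,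
        Matrix.mul_one, Matrix.mul_assoc]
    rw [Matrix.mul_assoc, ← h1, Matrix.nonsing_inv_mul_cancel_left _ _ hB]
  rw [key, Matrix.mulVecLin_mul]
  exact LinearMap.range_comp_le_range _ _

theorem stmt9 {n nm : ℕ} (hn : 0 < n) (hnm : 0 < nm) (hle : nm ≤ n)
    (Aplus : Matrix (Fin n) (Fin n) ℝ) (hAplus : Aplus.PosDef)
    (d : Fin nm → ℝ) (hd : ∀ k, 0 < d k)
    (V : Matrix (Fin n) (Fin nm) ℝ)
    (A : Matrix (Fin n) (Fin n) ℝ)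
    (hA : A = Aplus - V * Matrix.diagonal d * Vᵀ)
    (hApos : A.PosDef) :
    LinearMap.range (Aplus⁻¹ * V).mulVecLin = LinearMap.range (A⁻¹ * V).mulVecLin := by
  have h1 : IsUnit Aplus.det := hAplus.det_pos.ne'.isUnit
  have h2 : IsUnit A.det := hApos.det_pos.ne'.isUnit
  apply le_antisymm
  · apply range_aux A Aplus V (-(Matrix.diagonal d * Vᵀ)) h2 h1
    rw [hA, Matrix.mul_neg, Matrix.mul_assoc, sub_eq_add_neg]
  · apply range_aux Aplus A V (Matrix.diagonal d * Vᵀ) h1 h2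
    rw [hA, ← Matrix.mul_assoc, sub_add_cancel]
end

section
/- Let A_+ ∈ ℝ^{n×n} be symmetric positive definite, let Λ_- ∈ ℝ^{n_-×n_-} be diagonal positive definite, let V_- ∈ ℝ^{n×n_-} have orthonormal columns ((V_-)^T V_- = I), set A_- := V_- Λ_- (V_-)^T, and suppose A := A_+ − A_- is symmetric positive definite. Let W ∈ ℝ^{n×n_-} satisfy range(W) = range(A_+^{-1} V_-), and define Π_3 := I − W (W^T A W)^{-1} W^T A. Then W^T A W is invertible, Π_3 is an A-orthogonal projection (Π_3² = Π_3 and (Π_3)^T A = A Π_3), and its kernel and range satisfy Ker(Π_3) = range(A^{-1} V_-) and range(Π_3) = Ker(A_-). -/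
open Matrix

theorem exists_factor_of_range_le {n m k : ℕ} (B : Matrix (Fin n) (Fin m) ℝ)
    (C : Matrix (Fin n) (Fin k) ℝ)
    (h : LinearMap.range B.mulVecLin ≤ LinearMap.range C.mulVecLin) :
    ∃ X : Matrix (Fin k) (Fin m) ℝ, B = C * X := by
  have h1 : ∀ j : Fin m, ∃ x : Fin k → ℝ, C *ᵥ x = B.col j := by
    intro j
    have : B *ᵥ Pi.single j 1 ∈ LinearMap.range C.mulVecLin := h ⟨_, rfl⟩
    obtain ⟨x, hx⟩ := this
    refine ⟨x, ?_⟩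
    rw [← Matrix.mulVec_single_one]
    exact hx
  choose f hf using h1
  refine ⟨Matrix.of fun i j => f j i, ?_⟩
  ext i j
  have := congrFun (hf j) i
  simpa [Matrix.mul_apply, Matrix.mulVec, dotProduct] using this.symm

theorem stmt10 {n nm : ℕ} (hn : 0 < n) (hnm : 0 < nm) (hle : nm ≤ n)
    (Aplus : Matrix (Fin n) (Fin n) ℝ) (hAplus : Aplus.PosDef)
    (d : Fin nm → ℝ) (hd : ∀ k, 0 < d k)
    (V : Matrix (Fin n) (Fin nm) ℝ) (hVortho : Vᵀ * V = 1)
    (Aminus : Matrix (Fin n) (Fin n) ℝ)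
    (hAminus : Aminus = V * Matrix.diagonal d * Vᵀ)
    (A : Matrix (Fin n) (Fin n) ℝ)
    (hA : A = Aplus - Aminus)
    (hApos : A.PosDef)
    (W : Matrix (Fin n) (Fin nm) ℝ)
    (hW : LinearMap.range W.mulVecLin = LinearMap.range (Aplus⁻¹ * V).mulVecLin)
    (P3 : Matrix (Fin n) (Fin n) ℝ)
    (hP3 : P3 = 1 - W * (Wᵀ * A * W)⁻¹ * Wᵀ * A) :
    IsUnit (Wᵀ * A * W) ∧
      P3 * P3 = P3 ∧
      P3ᵀ * A = A * P3 ∧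
      LinearMap.ker P3.mulVecLin = LinearMap.range (A⁻¹ * V).mulVecLin ∧
      LinearMap.range P3.mulVecLin = LinearMap.ker Aminus.mulVecLin := by
  obtain ⟨X, hX⟩ := exists_factor_of_range_le _ _ hW.le
  obtain ⟨Y, hY⟩ := exists_factor_of_range_le _ _ hW.ge
  have hAps : Aplusᵀ = Aplus := by simpa using hAplus.isHermitian.eq
  have hAs : Aᵀ = A := by simpa using hApos.isHermitian.eq
  have hApu : IsUnit Aplus.det := (Matrix.isUnit_iff_isUnit_det _).1 hAplus.isUnit
  have hAu : IsUnit A.det := (Matrix.isUnit_iff_isUnit_det _).1 hApos.isUnit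
  have hApW : Aplus * W = V * X := by
    rw [hX, Matrix.mul_assoc, Matrix.mul_nonsing_inv_cancel_left _ _ hApu]
  have hVY : V = Aplus * W * Y := by
    rw [Matrix.mul_assoc, ← hY, Matrix.mul_nonsing_inv_cancel_left _ _ hApu]
  have hXY : X * Y = 1 := by
    have h : Vᵀ * V = Vᵀ * (V * X * Y) := by rw [← hApW, ← hVY]
    rw [Matrix.mul_assoc, ← Matrix.mul_assoc, hVortho, Matrix.one_mul] at h
    exact h.symm
  have hYX : Y * X = 1 := mul_eq_one_comm.1 hXY
  have hL : (Y * Vᵀ * Aplus) * W = 1 := by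
    rw [Matrix.mul_assoc, hApW, Matrix.mul_assoc, ← Matrix.mul_assoc Vᵀ, hVortho,
      Matrix.one_mul, hYX]
  have hWinj : Function.Injective W.mulVec := by
    intro u v huv
    have := congrArg ((Y * Vᵀ * Aplus) *ᵥ ·) huv
    simpa only [Matrix.mulVec_mulVec, hL, Matrix.one_mulVec] using this
  obtain ⟨M, hM⟩ : ∃ M : Matrix (Fin nm) (Fin nm) ℝ, A * W = V * M := by
    refine ⟨X - Matrix.diagonal d * Vᵀ * W, ?_⟩
    rw [hA, hAminus, Matrix.sub_mul, hApW, Matrix.mul_sub]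
    simp only [Matrix.mul_assoc]
  have hSpos : (Wᵀ * A * W).PosDef := by
    simpa using hApos.conjTranspose_mul_mul_same hWinj
  have hSu := hSpos.isUnit
  have hSs : (Wᵀ * A * W)ᵀ = Wᵀ * A * W := by simpa using hSpos.isHermitian.eq
  have hSd := (Matrix.isUnit_iff_isUnit_det _).1 hSu
  have hWA : Wᵀ * A = Mᵀ * Vᵀ := by
    rw [← Matrix.transpose_mul, ← hM, Matrix.transpose_mul, hAs]
  have hSM : Wᵀ * A * W = Wᵀ * V * M := by
    rw [Matrix.mul_assoc, hM, Matrix.mul_assoc]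
  set S := Wᵀ * A * W with hS
  have hNM : (S⁻¹ * (Wᵀ * V)) * M = 1 := by
    rw [Matrix.mul_assoc, ← hSM, Matrix.nonsing_inv_mul _ hSd]
  obtain ⟨N, hN⟩ : ∃ N, N * M = 1 := ⟨_, hNM⟩
  have hMN : M * N = 1 := mul_eq_one_comm.1 hN
  have hAV : A⁻¹ * V = W * N := by
    have : A * (W * N) = V := by rw [← Matrix.mul_assoc, hM, Matrix.mul_assoc, hMN, Matrix.mul_one]
    rw [← this, Matrix.nonsing_inv_mul_cancel_left _ _ hAu]
  have hP : P3 = 1 - W * (S⁻¹ * (Wᵀ * A)) := by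
    rw [hP3]; simp only [Matrix.mul_assoc]
  have hPW : P3 * W = 0 := by
    rw [hP, Matrix.sub_mul, Matrix.one_mul, Matrix.mul_assoc, Matrix.mul_assoc, ← hS,
      Matrix.nonsing_inv_mul _ hSd, Matrix.mul_one, sub_self]
  have hWP : Wᵀ * A * P3 = 0 := by
    rw [hP, Matrix.mul_sub, Matrix.mul_one, ← Matrix.mul_assoc, ← hS,
      Matrix.mul_nonsing_inv_cancel_left _ _ hSd, sub_self]
  have hVP : Vᵀ * P3 = 0 := by
    have h : Nᵀ * (Wᵀ * A * P3) = Vᵀ * P3 := by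
      rw [hWA, Matrix.mul_assoc, ← Matrix.mul_assoc, ← Matrix.transpose_mul, hMN,
        Matrix.transpose_one, Matrix.one_mul]
    rw [← h, hWP, Matrix.mul_zero]
  refine ⟨hSu, ?_, ?_, ?_, ?_⟩
  · have h : P3 * P3 = P3 * (1 - W * (S⁻¹ * (Wᵀ * A))) := congrArg (P3 * ·) hP
    rw [h, Matrix.mul_sub, Matrix.mul_one, ← Matrix.mul_assoc, hPW, Matrix.zero_mul, sub_zero]
  · rw [hP]
    simp only [Matrix.transpose_sub, Matrix.transpose_one, Matrix.transpose_mul,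
      Matrix.transpose_transpose, Matrix.transpose_nonsing_inv, hSs, hAs, Matrix.sub_mul,
      Matrix.mul_sub, Matrix.one_mul, Matrix.mul_one, Matrix.mul_assoc]
  · ext x
    simp only [LinearMap.mem_ker, LinearMap.mem_range, Matrix.mulVecLin_apply]
    constructor
    · intro hx
      rw [hP, Matrix.sub_mulVec, Matrix.one_mulVec, sub_eq_zero] at hx
      refine ⟨(M * (S⁻¹ * (Wᵀ * A))) *ᵥ x, ?_⟩
      rw [hAV, Matrix.mulVec_mulVec, Matrix.mul_assoc, ← Matrix.mul_assoc N, hN,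
        Matrix.one_mul]
      exact hx.symm
    · rintro ⟨y, rfl⟩
      rw [hAV, Matrix.mulVec_mulVec, ← Matrix.mul_assoc, hPW, Matrix.zero_mul,
        Matrix.zero_mulVec]
  · ext x
    simp only [LinearMap.mem_ker, LinearMap.mem_range, Matrix.mulVecLin_apply]
    constructor
    · rintro ⟨y, rfl⟩
      rw [hAminus, Matrix.mulVec_mulVec, Matrix.mul_assoc, hVP, Matrix.mul_zero,
        Matrix.zero_mulVec]
    · intro hx
      have h1 : (Matrix.diagonal d) *ᵥ (Vᵀ *ᵥ x) = 0 := by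
        have := congrArg (Vᵀ *ᵥ ·) hx
        simp only [hAminus, Matrix.mulVec_mulVec, Matrix.mulVec_zero] at this
        rw [Matrix.mul_assoc V, ← Matrix.mul_assoc Vᵀ, hVortho, Matrix.one_mul] at this
        rw [Matrix.mulVec_mulVec, this]
      have h2 : Vᵀ *ᵥ x = 0 := by
        ext k
        have := congrFun h1 k
        rw [Matrix.mulVec_diagonal] at this
        exact (mul_eq_zero.1 this).resolve_left (hd k).ne'
      refine ⟨x, ?_⟩
      rw [hP, Matrix.sub_mulVec, Matrix.one_mulVec, hWA, ← Matrix.mulVec_mulVec,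
        ← Matrix.mulVec_mulVec, ← Matrix.mulVec_mulVec, h2]
      simp
end

section
/- Let A_+ ∈ ℝ^{n×n} be symmetric positive definite, let Λ_- ∈ ℝ^{n_-×n_-} be diagonal positive definite, let V_- ∈ ℝ^{n×n_-} have orthonormal columns, set A_- := V_- Λ_- (V_-)^T, and suppose A := A_+ − A_- is symmetric positive definite. Let W ∈ ℝ^{n×n_-} satisfy range(W) = range(A_+^{-1} V_-), and define Π_3 := I − W (W^T A W)^{-1} W^T A. Then A_- Π_3 = 0, and consequently A Π_3 = A_+ Π_3. -/
open Matrix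

theorem stmt11 {n nm : ℕ} (hn : 0 < n) (hnm : 0 < nm) (hle : nm ≤ n)
    (Aplus : Matrix (Fin n) (Fin n) ℝ) (hAplus : Aplus.PosDef)
    (d : Fin nm → ℝ) (hd : ∀ k, 0 < d k)
    (V : Matrix (Fin n) (Fin nm) ℝ) (hVortho : Vᵀ * V = 1)
    (Aminus : Matrix (Fin n) (Fin n) ℝ)
    (hAminus : Aminus = V * Matrix.diagonal d * Vᵀ)
    (A : Matrix (Fin n) (Fin n) ℝ)
    (hA : A = Aplus - Aminus)
    (hApos : A.PosDef)
    (W : Matrix (Fin n) (Fin nm) ℝ)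
    (hW : LinearMap.range W.mulVecLin = LinearMap.range (Aplus⁻¹ * V).mulVecLin)
    (P3 : Matrix (Fin n) (Fin n) ℝ)
    (hP3 : P3 = 1 - W * (Wᵀ * A * W)⁻¹ * Wᵀ * A) :
    Aminus * P3 = 0 ∧ A * P3 = Aplus * P3 := by
  have hUp : IsUnit Aplus.det := (Matrix.isUnit_iff_isUnit_det _).1 hAplus.isUnit
  have hUA : IsUnit A.det := (Matrix.isUnit_iff_isUnit_det _).1 hApos.isUnit
  have hAT : Aᵀ = A := by
    have h := hApos.1.eq
    rwa [Matrix.conjTranspose_eq_transpose_of_trivial] at h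
  -- U = W C
  have hex : ∀ j, ∃ c : Fin nm → ℝ, W *ᵥ c = (Aplus⁻¹ * V) *ᵥ (Pi.single j 1) := by
    intro j
    have h : (Aplus⁻¹ * V).mulVecLin (Pi.single j 1) ∈ LinearMap.range W.mulVecLin := by
      rw [hW]; exact ⟨_, rfl⟩
    obtain ⟨c, hc⟩ := h
    exact ⟨c, hc⟩
  choose c hc using hex
  obtain ⟨C, hC⟩ : ∃ C : Matrix (Fin nm) (Fin nm) ℝ, W * C = Aplus⁻¹ * V := by
    refine ⟨Matrix.of fun i j => c j i, ?_⟩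
    ext i j
    have h := congrFun (hc j) i
    rw [Matrix.mulVec_single_one] at h
    exact h
  have hV : Aplus * (W * C) = V := by
    rw [hC, Matrix.mul_nonsing_inv_cancel_left _ _ hUp]
  have hL : C * (Vᵀ * Aplus * W) = 1 := by
    rw [_root_.mul_eq_one_comm]
    calc Vᵀ * Aplus * W * C = Vᵀ * (Aplus * (W * C)) := by simp only [Matrix.mul_assoc]
      _ = 1 := by rw [hV, hVortho]
  have hinj : Function.Injective W.mulVec := by
    intro x y hxy
    have h : (C * (Vᵀ * Aplus)) *ᵥ (W *ᵥ x) = (C * (Vᵀ * Aplus)) *ᵥ (W *ᵥ y) :=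
      congrArg _ hxy
    have e : C * (Vᵀ * Aplus) * W = 1 := by rw [← hL]; simp only [Matrix.mul_assoc]
    simpa [Matrix.mulVec_mulVec, e] using h
  have hM : (Wᵀ * A * W).PosDef := by
    have h := hApos.conjTranspose_mul_mul_same hinj
    rwa [Matrix.conjTranspose_eq_transpose_of_trivial] at h
  have hUM : IsUnit (Wᵀ * A * W).det := (Matrix.isUnit_iff_isUnit_det _).1 hM.isUnit
  have hWP : Wᵀ * A * P3 = 0 := by
    have h : Wᵀ * A * P3 = Wᵀ * A - (Wᵀ * A * W) * (Wᵀ * A * W)⁻¹ * (Wᵀ * A) := by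
      rw [hP3, Matrix.mul_sub, Matrix.mul_one]
      simp only [Matrix.mul_assoc]
    rw [h, Matrix.mul_nonsing_inv _ hUM, Matrix.one_mul, sub_self]
  obtain ⟨S, hS⟩ : ∃ S : Matrix (Fin nm) (Fin nm) ℝ, A * (W * C) = V * S := by
    refine ⟨1 - Matrix.diagonal d * (Vᵀ * (W * C)), ?_⟩
    rw [hA, Matrix.sub_mul, hV, hAminus, Matrix.mul_sub, Matrix.mul_one]
    simp only [Matrix.mul_assoc]
  have hT : S * (Vᵀ * Aplus * A⁻¹ * V) = 1 := by
    rw [_root_.mul_eq_one_comm]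
    calc Vᵀ * Aplus * A⁻¹ * V * S = Vᵀ * (Aplus * (A⁻¹ * (V * S))) := by
          simp only [Matrix.mul_assoc]
      _ = 1 := by rw [← hS, Matrix.nonsing_inv_mul_cancel_left _ _ hUA, hV, hVortho]
  obtain ⟨T, hT⟩ : ∃ T, S * T = 1 := ⟨_, hT⟩
  have hVe : V = A * (W * (C * T)) := by
    calc V = V * (S * T) := by rw [hT, Matrix.mul_one]
      _ = (A * (W * C)) * T := by rw [hS, Matrix.mul_assoc]
      _ = _ := by simp only [Matrix.mul_assoc]
  have hVP : Vᵀ * P3 = 0 := by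
    have h : Vᵀ = (C * T)ᵀ * (Wᵀ * A) := by
      conv_lhs => rw [hVe]
      rw [Matrix.transpose_mul, Matrix.transpose_mul W, hAT, Matrix.mul_assoc]
    rw [h, Matrix.mul_assoc, hWP, Matrix.mul_zero]
  have h0 : Aminus * P3 = 0 := by
    rw [hAminus, Matrix.mul_assoc, hVP, Matrix.mul_zero]
  exact ⟨h0, by rw [hA, Matrix.sub_mul, h0, sub_zero]⟩
end

section
/- Let A_+ ∈ ℝ^{n×n} be symmetric positive definite, let Λ_- ∈ ℝ^{n_-×n_-} be diagonal positive definite, let V_- ∈ ℝ^{n×n_-} have orthonormal columns, and suppose A := A_+ − V_- Λ_- (V_-)^T is symmetric positive definite. Let W ∈ ℝ^{n×n_-} satisfy range(W) = range(A_+^{-1} V_-), and define Π_3 := I − W (W^T A W)^{-1} W^T A. Let H_2 ∈ ℝ^{n×n} be symmetric positive definite and let 0 < λ_min ≤ λ_max be such that every eigenvalue of H_2 A_+ lies in [λ_min, λ_max]. Then every nonzero eigenvalue λ of H_2 A Π_3 satisfies λ_min ≤ λ ≤ λ_max. -/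
open Matrix

lemma aux_psd_s12 {n : ℕ} (M : Matrix (Fin n) (Fin n) ℝ) (hM : M.IsHermitian)
    (h : ∀ (μ : ℝ) (u : Fin n → ℝ), u ≠ 0 → M *ᵥ u = μ • u → 0 ≤ μ) (u : Fin n → ℝ) :
    0 ≤ u ⬝ᵥ (M *ᵥ u) := by
  have hp : M.PosSemidef := by
    rw [hM.posSemidef_iff_eigenvalues_nonneg]
    intro i
    refine h _ _ ?_ (hM.mulVec_eigenvectorBasis i)
    intro h0
    have h1 := (hM.eigenvectorBasis.orthonormal.1 i)
    have h2 : hM.eigenvectorBasis i = 0 := by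
      ext j; exact congrFun h0 j
    rw [h2] at h1
    simp at h1
  simpa using hp.dotProduct_mulVec_nonneg u

open scoped MatrixOrder Matrix.Norms.L2Operator in
lemma aux_fac {n : ℕ} (M : Matrix (Fin n) (Fin n) ℝ) (hM : M.PosSemidef) :
    ∃ B : Matrix (Fin n) (Fin n) ℝ, M = Bᴴ * B :=
  CStarAlgebra.nonneg_iff_eq_star_mul_self.mp hM.nonneg

theorem stmt12 {n nm : ℕ} (hn : 0 < n) (hnm : 0 < nm) (hle : nm ≤ n)
    (Aplus : Matrix (Fin n) (Fin n) ℝ) (hAplus : Aplus.PosDef)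
    (d : Fin nm → ℝ) (hd : ∀ k, 0 < d k)
    (V : Matrix (Fin n) (Fin nm) ℝ) (hVortho : Vᵀ * V = 1)
    (A : Matrix (Fin n) (Fin n) ℝ)
    (hA : A = Aplus - V * Matrix.diagonal d * Vᵀ)
    (hApos : A.PosDef)
    (W : Matrix (Fin n) (Fin nm) ℝ)
    (hW : LinearMap.range W.mulVecLin = LinearMap.range (Aplus⁻¹ * V).mulVecLin)
    (P3 : Matrix (Fin n) (Fin n) ℝ)
    (hP3 : P3 = 1 - W * (Wᵀ * A * W)⁻¹ * Wᵀ * A)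
    (H2 : Matrix (Fin n) (Fin n) ℝ) (hH2 : H2.PosDef)
    (lmin lmax : ℝ) (hlmin : 0 < lmin) (hlml : lmin ≤ lmax)
    (hspec : ∀ (lam : ℝ) (x : Fin n → ℝ), x ≠ 0 →
      (H2 * Aplus) *ᵥ x = lam • x → lmin ≤ lam ∧ lam ≤ lmax) :
    ∀ (lam : ℝ) (x : Fin n → ℝ), x ≠ 0 → (H2 * A * P3) *ᵥ x = lam • x → lam ≠ 0 →
      lmin ≤ lam ∧ lam ≤ lmax := by
  intro lam x hx hlx hlam
  have hAu : IsUnit Aplus.det := (Matrix.isUnit_iff_isUnit_det _).1 hAplus.isUnit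
  have hAA : Aplus * Aplus⁻¹ = 1 := Matrix.mul_nonsing_inv _ hAu
  have hAA' : Aplus⁻¹ * Aplus = 1 := Matrix.nonsing_inv_mul _ hAu
  have hAs : Aplusᵀ = Aplus := by simpa using hAplus.isHermitian.eq
  have hAst : Aᵀ = A := by simpa using hApos.isHermitian.eq
  have hHs : H2ᵀ = H2 := by simpa using hH2.isHermitian.eq
  -- W is injective
  have hKinj : Function.Injective (Aplus⁻¹ * V).mulVecLin := by
    apply Function.LeftInverse.injective (g := (Vᵀ * Aplus).mulVecLin)
    intro c
    have : Vᵀ * Aplus * (Aplus⁻¹ * V) = 1 := by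
      rw [Matrix.mul_assoc, ← Matrix.mul_assoc Aplus, hAA, Matrix.one_mul, hVortho]
    simp only [Matrix.mulVecLin_apply, Matrix.mulVec_mulVec, this, Matrix.one_mulVec]
  have hWinj : Function.Injective W.mulVec := by
    have h1 := LinearMap.finrank_range_of_inj hKinj
    rw [← hW] at h1
    have h2 := LinearMap.finrank_range_add_finrank_ker W.mulVecLin
    have h3 : Module.finrank ℝ (LinearMap.ker W.mulVecLin) = 0 := by omega
    have h4 := Submodule.finrank_eq_zero.1 h3
    exact LinearMap.ker_eq_bot.1 h4
  have hWAW : (Wᵀ * A * W).PosDef := by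
    simpa using hApos.conjTranspose_mul_mul_same hWinj
  have hWu : IsUnit (Wᵀ * A * W).det := (Matrix.isUnit_iff_isUnit_det _).1 hWAW.isUnit
  have hWP : Wᵀ * A * P3 = 0 := by
    have : Wᵀ * A * P3 = Wᵀ * A - (Wᵀ * A * W) * (Wᵀ * A * W)⁻¹ * (Wᵀ * A) := by
      rw [hP3, Matrix.mul_sub, Matrix.mul_one]; simp only [Matrix.mul_assoc]
    rw [this, Matrix.mul_nonsing_inv _ hWu, Matrix.one_mul, sub_self]
  obtain ⟨y, hy⟩ : ∃ y, y = P3 *ᵥ x := ⟨_, rfl⟩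
  have hWy : Wᵀ *ᵥ (A *ᵥ y) = 0 := by
    rw [hy, Matrix.mulVec_mulVec, Matrix.mulVec_mulVec, hWP, Matrix.zero_mulVec]
  have hVy0 : Vᵀ *ᵥ (Aplus⁻¹ *ᵥ (A *ᵥ y)) = 0 := by
    apply dotProduct_eq_zero
    intro c
    have : (Aplus⁻¹ * V) *ᵥ c ∈ LinearMap.range W.mulVecLin := by
      rw [hW]; exact ⟨c, rfl⟩
    obtain ⟨b, hb⟩ := this
    have hb' : W *ᵥ b = (Aplus⁻¹ * V) *ᵥ c := hb
    have e1 : Vᵀ *ᵥ (Aplus⁻¹ *ᵥ (A *ᵥ y)) = (Aplus⁻¹ * V)ᵀ *ᵥ (A *ᵥ y) := by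
      rw [Matrix.transpose_mul, Matrix.transpose_nonsing_inv, hAs, Matrix.mulVec_mulVec]
    rw [e1, Matrix.mulVec_transpose, ← Matrix.dotProduct_mulVec, ← hb', Matrix.dotProduct_mulVec,
      ← Matrix.mulVec_transpose, hWy, zero_dotProduct]
  have hAy : ∀ z, A *ᵥ z = Aplus *ᵥ z - V *ᵥ (Matrix.diagonal d *ᵥ (Vᵀ *ᵥ z)) := by
    intro z
    rw [hA, Matrix.sub_mulVec, Matrix.mulVec_mulVec, Matrix.mulVec_mulVec, Matrix.mul_assoc]
  have hVy : Vᵀ *ᵥ y = 0 := by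
    obtain ⟨u, hu⟩ : ∃ u, u = Aplus⁻¹ *ᵥ (V *ᵥ (Matrix.diagonal d *ᵥ (Vᵀ *ᵥ y))) := ⟨_, rfl⟩
    have h1 : Vᵀ *ᵥ y = Vᵀ *ᵥ u := by
      rw [hAy, Matrix.mulVec_sub, ← hu, Matrix.mulVec_mulVec y, hAA', Matrix.one_mulVec,
        Matrix.mulVec_sub, sub_eq_zero] at hVy0
      exact hVy0
    have h2 : A *ᵥ u = 0 := by
      rw [hAy, ← h1]
      nth_rewrite 1 [hu]
      rw [Matrix.mulVec_mulVec _ Aplus, hAA, Matrix.one_mulVec, sub_self]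
    have h3 : u = 0 := by
      by_contra hne
      have := hApos.dotProduct_mulVec_pos hne
      simp [h2] at this
    rw [h1, h3, Matrix.mulVec_zero]
  have hAy' : A *ᵥ y = Aplus *ᵥ y := by
    rw [hAy, hVy]; simp
  have hH : H2 *ᵥ (Aplus *ᵥ y) = lam • x := by
    rw [← hAy', hy, Matrix.mulVec_mulVec, Matrix.mulVec_mulVec, hlx]
  have hy0 : y ≠ 0 := by
    intro h0
    rw [h0] at hH
    simp only [Matrix.mulVec_zero] at hH
    exact (smul_ne_zero hlam hx) hH.symm
  obtain ⟨c, hc⟩ : ∃ c, x = y + (Aplus⁻¹ * V) *ᵥ c := by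
    have : W *ᵥ (((Wᵀ * A * W)⁻¹ * Wᵀ * A) *ᵥ x) ∈ LinearMap.range (Aplus⁻¹ * V).mulVecLin := by
      rw [← hW]; exact ⟨_, rfl⟩
    obtain ⟨c, hc⟩ := this
    refine ⟨c, ?_⟩
    have hc' : (Aplus⁻¹ * V) *ᵥ c = W *ᵥ (((Wᵀ * A * W)⁻¹ * Wᵀ * A) *ᵥ x) := hc
    rw [hc', hy, hP3, Matrix.sub_mulVec, Matrix.one_mulVec, Matrix.mulVec_mulVec]
    simp only [Matrix.mul_assoc, sub_add_cancel]
  have hxy : (Aplus *ᵥ y) ⬝ᵥ x = (Aplus *ᵥ y) ⬝ᵥ y := by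
    have e : (Aplus *ᵥ y) ⬝ᵥ ((Aplus⁻¹ * V) *ᵥ c) = 0 := by
      nth_rewrite 1 [← hAs]
      rw [Matrix.mulVec_transpose, ← Matrix.dotProduct_mulVec, Matrix.mulVec_mulVec,
        ← Matrix.mul_assoc, hAA, Matrix.one_mul, Matrix.dotProduct_mulVec,
        ← Matrix.mulVec_transpose, hVy, zero_dotProduct]
    rw [hc, dotProduct_add, e, add_zero]
  have key : (Aplus *ᵥ y) ⬝ᵥ (H2 *ᵥ (Aplus *ᵥ y)) = lam * ((Aplus *ᵥ y) ⬝ᵥ y) := by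
    rw [hH, dotProduct_smul, hxy, smul_eq_mul]
  have hpos : 0 < (Aplus *ᵥ y) ⬝ᵥ y := by
    have := hAplus.dotProduct_mulVec_pos hy0
    rw [dotProduct_comm]; simpa using this
  -- factor Aplus
  obtain ⟨B, hBu, hB⟩ : ∃ B : Matrix (Fin n) (Fin n) ℝ, IsUnit B ∧ Aplus = Bᵀ * B := by
    obtain ⟨B, hB⟩ := aux_fac Aplus hAplus.posSemidef
    have hB' : Aplus = Bᵀ * B := by simpa using hB
    refine ⟨B, ?_, hB'⟩
    rw [Matrix.isUnit_iff_isUnit_det]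
    rw [hB', Matrix.det_mul] at hAu
    exact isUnit_of_mul_isUnit_right hAu
  have hS : (B * H2 * Bᵀ)ᵀ = B * H2 * Bᵀ := by
    simp [Matrix.transpose_mul, hHs, Matrix.mul_assoc]
  have hSspec : ∀ (μ : ℝ) (u : Fin n → ℝ), u ≠ 0 → (B * H2 * Bᵀ) *ᵥ u = μ • u →
      lmin ≤ μ ∧ μ ≤ lmax := by
    intro μ u hu h
    apply hspec μ ((H2 * Bᵀ) *ᵥ u)
    · intro h0
      have hunit : IsUnit (H2 * Bᵀ) := hH2.isUnit.mul ((Matrix.isUnit_transpose B).2 hBu)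
      apply hu
      exact Matrix.mulVec_injective_of_isUnit hunit (by simpa using h0)
    · have : H2 * Aplus * (H2 * Bᵀ) = (H2 * Bᵀ) * (B * H2 * Bᵀ) := by
        rw [hB]; simp only [Matrix.mul_assoc]
      rw [Matrix.mulVec_mulVec, this, ← Matrix.mulVec_mulVec, h, Matrix.mulVec_smul]
  have q1 : (B *ᵥ y) ⬝ᵥ ((B * H2 * Bᵀ) *ᵥ (B *ᵥ y)) = lam * ((Aplus *ᵥ y) ⬝ᵥ y) := by
    rw [← key, hB, ← Matrix.mulVec_mulVec, ← Matrix.mulVec_mulVec, Matrix.mulVec_mulVec _ Bᵀ,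
      Matrix.dotProduct_mulVec, ← Matrix.mulVec_transpose, Matrix.dotProduct_mulVec _ H2,
      Matrix.mulVec_mulVec, Matrix.dotProduct_mulVec _ H2]
  have q2 : (B *ᵥ y) ⬝ᵥ (B *ᵥ y) = (Aplus *ᵥ y) ⬝ᵥ y := by
    rw [hB, ← Matrix.mulVec_mulVec, Matrix.mulVec_transpose, ← Matrix.dotProduct_mulVec]
  have r1 := aux_psd_s12 (B * H2 * Bᵀ - lmin • 1) (by
      rw [Matrix.IsHermitian, Matrix.conjTranspose_eq_transpose_of_trivial, Matrix.transpose_sub, hS]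
      simp) (by
      intro μ u hu h
      have := (hSspec (μ + lmin) u hu (by
        rw [add_smul, ← h, Matrix.sub_mulVec, Matrix.smul_mulVec, Matrix.one_mulVec,
          sub_add_cancel])).1
      linarith) (B *ᵥ y)
  have r2 := aux_psd_s12 (lmax • 1 - B * H2 * Bᵀ) (by
      rw [Matrix.IsHermitian, Matrix.conjTranspose_eq_transpose_of_trivial, Matrix.transpose_sub, hS]
      simp) (by
      intro μ u hu h
      have := (hSspec (lmax - μ) u hu (by
        rw [sub_smul, ← h, Matrix.sub_mulVec, Matrix.smul_mulVec, Matrix.one_mulVec,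
          sub_sub_cancel])).2
      linarith) (B *ᵥ y)
  rw [Matrix.sub_mulVec, Matrix.smul_mulVec, Matrix.one_mulVec, dotProduct_sub, dotProduct_smul,
    q1, q2, smul_eq_mul, ← sub_mul] at r1 r2
  constructor
  · have := nonneg_of_mul_nonneg_left r1 hpos
    linarith
  · have := nonneg_of_mul_nonneg_left r2 hpos
    linarith
end

section
/- Let A ∈ ℝ^{n×n} be symmetric positive definite and let W ∈ ℝ^{n×m} have full column rank. Then W^T A W is invertible and for all x ∈ ℝ^n, ⟨x, W (W^T A W)^{-1} W^T x⟩ ≤ ⟨x, A^{-1} x⟩; equivalently, ⟨x, A W (W^T A W)^{-1} W^T A x⟩ ≤ ⟨x, A x⟩ for all x ∈ ℝ^n. -/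
open Matrix

theorem stmt19 {n m : ℕ} (hm : 0 < m) (hle : m ≤ n)
    (A : Matrix (Fin n) (Fin n) ℝ) (hA : A.PosDef)
    (W : Matrix (Fin n) (Fin m) ℝ) (hW : W.rank = m) :
    IsUnit (Wᵀ * A * W) ∧
      (∀ x : Fin n → ℝ,
        x ⬝ᵥ ((W * (Wᵀ * A * W)⁻¹ * Wᵀ) *ᵥ x) ≤ x ⬝ᵥ (A⁻¹ *ᵥ x)) ∧
      (∀ x : Fin n → ℝ,
        x ⬝ᵥ ((A * W * (Wᵀ * A * W)⁻¹ * Wᵀ * A) *ᵥ x) ≤ x ⬝ᵥ (A *ᵥ x)) := by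
  have hinj : Function.Injective W.mulVec := by
    have h := W.mulVecLin.finrank_range_add_finrank_ker
    have h2 : Module.finrank ℝ (LinearMap.range W.mulVecLin) = m := hW
    rw [h2, Module.finrank_fin_fun] at h
    have h3 : Module.finrank ℝ (LinearMap.ker W.mulVecLin) = 0 := by omega
    exact LinearMap.ker_eq_bot.1 (Submodule.finrank_eq_zero.1 h3)
  have hG : (Wᵀ * A * W).PosDef := by
    simpa using hA.conjTranspose_mul_mul_same hinj
  have hAT : Aᵀ = A := by simpa using hA.isHermitian.eq
  have hGT : (Wᵀ * A * W)ᵀ = Wᵀ * A * W := by simpa using hG.isHermitian.eq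
  have hAu : IsUnit A.det := (isUnit_iff_isUnit_det A).1 hA.isUnit
  have hGu : IsUnit (Wᵀ * A * W).det := (isUnit_iff_isUnit_det _).1 hG.isUnit
  set P := W * (Wᵀ * A * W)⁻¹ * Wᵀ with hP
  have hPT : Pᵀ = P := by
    rw [hP, transpose_mul, transpose_mul, transpose_nonsing_inv, hGT, transpose_transpose]
    simp only [Matrix.mul_assoc]
  have hPAP : P * A * P = P := by
    calc P * A * P = W * ((Wᵀ * A * W)⁻¹ * (Wᵀ * A * W)) * (Wᵀ * A * W)⁻¹ * Wᵀ := by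
          simp only [hP, Matrix.mul_assoc]
      _ = P := by rw [nonsing_inv_mul _ hGu, Matrix.mul_one]
  have key : (A⁻¹ - P)ᵀ * A * (A⁻¹ - P) = A⁻¹ - P := by
    rw [transpose_sub, hPT, transpose_nonsing_inv, hAT, Matrix.sub_mul, nonsing_inv_mul _ hAu,
      Matrix.sub_mul, Matrix.mul_sub, Matrix.mul_sub, hPAP, Matrix.mul_assoc P,
      mul_nonsing_inv _ hAu]
    simp
  have hpsd : (A⁻¹ - P).PosSemidef := by
    have := hA.posSemidef.conjTranspose_mul_mul_same (A⁻¹ - P)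
    rwa [conjTranspose_eq_transpose_of_trivial, key] at this
  have h2 : ∀ x : Fin n → ℝ, x ⬝ᵥ (P *ᵥ x) ≤ x ⬝ᵥ (A⁻¹ *ᵥ x) := by
    intro x
    have := hpsd.dotProduct_mulVec_nonneg x
    simp only [star_trivial, sub_mulVec, dotProduct_sub] at this
    linarith
  refine ⟨hG.isUnit, h2, fun x => ?_⟩
  have h := h2 (A *ᵥ x)
  have e : ∀ M : Matrix (Fin n) (Fin n) ℝ,
      (A *ᵥ x) ⬝ᵥ (M *ᵥ (A *ᵥ x)) = x ⬝ᵥ ((A * M * A) *ᵥ x) := by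
    intro M
    rw [← mulVec_mulVec, ← mulVec_mulVec, dotProduct_mulVec x A, ← mulVec_transpose, hAT]
  rw [e, e, mul_nonsing_inv _ hAu, Matrix.one_mul] at h
  simpa only [hP, Matrix.mul_assoc] using h
end
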